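/- Let g be a finite-dimensional semisimple Lie algebra over an algebraically closed field K of characteristic 0, let (e,h,f) be an sl2-triple in g, and for i ∈ ℤ let g(h,i) = {z ∈ g : [h,z] = i·z}. For any integer i, let k denote the linear span of {[x,y] : x ∈ g(h,i), y ∈ g(h,-i)}, which is a Lie subalgebra of g(h,0). Then k is reductive and every element of the center of k is ad-semisimple in g; that is, k = [k,k] ⊕ z(k) with [k,k] a semisimple Lie algebra and ad_z : g → g a semisimple endomorphism for every z in the center z(k) of k. -/

import Mathlib

open Module.End

/-!
The idea is that, for semisimple `ad h`, the trace form of the adjoint representation of `g` is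
nondegenerate on `k = [g(h, a), g(h, -a)]`. An element `z` of its kernel pairs to zero with all
`[x, y]`, so by invariance `[z, x]` is orthogonal to `g(h, -a)` and hence zero for `x ∈ g(h, a)`,
and similarly for `x ∈ g(h, -a)`. Thus `z` is a sum of brackets `[x, y]` with `[z, y] = 0`, and
such an element acts nilpotently because all traces of powers of its action vanish. These `z` form
an ideal of the centralizer of `h`, on which the Killing form is nondegenerate, whereas an ideal
acting nilpotently is in the kernel of the trace form; so `z = 0`.

A nondegenerate trace form makes `k` reductive. It also makes the center of `k` commute with the
whole centralizer of `h`, so that it lies in a Cartan subalgebra of `g`.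
-/

namespace SpanBracket

section Eigenspaces

variable {K M : Type*} [Field K] [AddCommGroup M] [Module K M] {T : Module.End K M}

theorem inf_maxGenEigenspace_le_eigenspace {p : Submodule K M} {μ : K}
    (hp : ∀ u ∈ p, T u ∈ p)
    (hT : ∀ u ∈ p, ∀ w, T u = μ • u + w → T w = μ • w → w = 0) :
    p ⊓ T.maxGenEigenspace μ ≤ T.eigenspace μ := by
  rintro u ⟨hu, hμ⟩
  obtain ⟨n, hn⟩ := (mem_maxGenEigenspace T μ u).mp hμ
  rw [mem_eigenspace_iff, ← sub_eq_zero]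
  clear hμ
  induction n generalizing u with
  | zero => simp_all
  | succ n ih =>
    refine hT u hu _ (add_sub_cancel _ _).symm (sub_eq_zero.mp ?_)
    exact ih (p.sub_mem (hp u hu) (p.smul_mem μ hu)) (by simpa [pow_succ] using hn)

theorem isSemisimple_of_iSup_eigenspace_eq_top [FiniteDimensional K M]
    (hT : ⨆ μ, T.eigenspace μ = ⊤) : T.IsSemisimple := by
  refine isSemisimple_of_squarefree_aeval_eq_zero
    (p := ∏ μ ∈ (finite_hasEigenvalue T).toFinset, (Polynomial.X - Polynomial.C μ))
    (Polynomial.separable_prod_X_sub_C_iff'.mpr fun _ _ _ _ ↦ id).squarefree ?_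
  rw [← LinearMap.ker_eq_top, eq_top_iff, ← hT, iSup_le_iff]
  intro μ u hu
  by_cases hu0 : u = 0
  · rw [hu0]
    exact zero_mem _
  have hv : T.HasEigenvector μ u := ⟨hu, hu0⟩
  have hμ : μ ∈ (finite_hasEigenvalue T).toFinset := by
    simpa using hasEigenvalue_of_hasEigenvector hv
  rw [LinearMap.mem_ker, aeval_apply_of_hasEigenvector hv, Polynomial.eval_prod,
    Finset.prod_eq_zero hμ (by simp), zero_smul]

end Eigenspaces

section TracePowers

open Polynomial

theorem trace_aeval_mul_X_eq_zero {R M : Type*} [CommRing R] [AddCommGroup M] [Module R M]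
    {x : Module.End R M} (hx : ∀ m : ℕ, LinearMap.trace R M (x ^ (m + 1)) = 0) (q : R[X]) :
    LinearMap.trace R M (aeval x (q * X)) = 0 := by
  induction q using Polynomial.induction_on' with
  | add p q hp hq => rw [add_mul, map_add, map_add, hp, hq, add_zero]
  | monomial n c =>
    rw [monomial_mul_X, aeval_monomial, ← Algebra.smul_def, map_smul, hx, smul_zero]

variable {K V : Type*} [Field K] [CharZero K] [AddCommGroup V] [Module K V]
  [FiniteDimensional K V]

theorem isNilpotent_of_forall_trace_pow_eq_zero {x : Module.End K V}
    (hx : ∀ m : ℕ, LinearMap.trace K V (x ^ (m + 1)) = 0) : IsNilpotent x := by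
  obtain ⟨r, hχ, hr⟩ := exists_eq_pow_rootMultiplicity_mul_and_not_dvd x.charpoly
    (LinearMap.charpoly_monic x).ne_zero 0
  set a := rootMultiplicity 0 x.charpoly
  rw [C_0, sub_zero] at hχ hr
  have annihilates : aeval x (X ^ a * r) = 0 := hχ ▸ LinearMap.aeval_self_charpoly x
  obtain ⟨u, v, huv⟩ : IsCoprime (X ^ (a + 1)) r :=
    .pow_left (irreducible_X.coprime_iff_not_dvd.mpr hr)
  -- The projection onto the part of `V` where `x` is invertible; its rank is its trace.
  set P := aeval x (u * X ^ (a + 1)) with hP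
  have one_sub_P : aeval x (v * r) = 1 - P := by
    rw [eq_sub_iff_add_eq', hP, ← map_add, huv, map_one]
  have idempotent : IsIdempotentElem P := by
    have : P * (1 - P) = 0 := by
      rw [← one_sub_P, hP, ← map_mul,
        show u * X ^ (a + 1) * (v * r) = u * X * v * (X ^ a * r) by ring, map_mul, annihilates,
        mul_zero]
    rwa [mul_sub, mul_one, sub_eq_zero, eq_comm] at this
  have P_eq_zero : P = 0 := by
    refine LinearMap.IsIdempotentElem.eq_zero_of_trace_eq_zero idempotent ?_
    rw [hP, pow_succ, ← mul_assoc]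
    exact trace_aeval_mul_X_eq_zero hx _
  refine ⟨a, ?_⟩
  calc x ^ a = aeval x (X ^ a) * aeval x (v * r) := by rw [one_sub_P, P_eq_zero]; simp
    _ = aeval x (X ^ a * r) * aeval x v := by rw [← map_mul, ← map_mul]; ring_nf
    _ = 0 := by rw [annihilates, zero_mul]

theorem isNilpotent_of_mem_span_commutator {x : Module.End K V}
    (hx : x ∈ Submodule.span K {z | ∃ a b : Module.End K V, Commute x b ∧ a * b - b * a = z}) :
    IsNilpotent x := by
  refine isNilpotent_of_forall_trace_pow_eq_zero fun m ↦ ?_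
  suffices Submodule.span K {z | ∃ a b : Module.End K V, Commute x b ∧ a * b - b * a = z} ≤
      LinearMap.ker (LinearMap.trace K V ∘ₗ LinearMap.mulRight K (x ^ m)) by
    rw [pow_succ']
    exact this hx
  rw [Submodule.span_le]
  rintro _ ⟨a, b, hxb, rfl⟩
  change LinearMap.trace K V ((a * b - b * a) * x ^ m) = 0
  rw [sub_mul, map_sub, sub_eq_zero, mul_assoc b, LinearMap.trace_mul_comm K b, mul_assoc,
    mul_assoc, (hxb.pow_left m).eq]

end TracePowers

section NilpotentAction

variable {K L M : Type*} [Field K] [CharZero K] [LieRing L] [LieAlgebra K L]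
  [AddCommGroup M] [Module K M] [LieRingModule L M] [LieModule K L M] [FiniteDimensional K M]

theorem isNilpotent_toEnd_of_mem_span_lie {x : L}
    (hx : x ∈ Submodule.span K {z | ∃ a b : L, ⁅x, b⁆ = 0 ∧ ⁅a, b⁆ = z}) :
    IsNilpotent (LieModule.toEnd K L M x) := by
  have := Submodule.mem_map_of_mem (f := (LieModule.toEnd K L M : L →ₗ[K] Module.End K M)) hx
  rw [Submodule.map_span] at this
  refine isNilpotent_of_mem_span_commutator (Submodule.span_mono ?_ this)
  rintro _ ⟨_, ⟨a, b, hxb, rfl⟩, rfl⟩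
  refine ⟨LieModule.toEnd K L M a, LieModule.toEnd K L M b, ?_, ?_⟩
  · ext v
    have := lie_lie x b v
    rwa [hxb, zero_lie, eq_comm, sub_eq_zero] at this
  · ext v
    exact (lie_lie a b v).symm

end NilpotentAction

section Sl2

open LieModule (toEnd)

variable {K L M : Type*} [Field K] [LieRing L] [LieAlgebra K L]
  [AddCommGroup M] [Module K M] [LieRingModule L M] [LieModule K L M] {h e f : L}

section

variable (K M)

theorem isNilpotent_toEnd_e [CharZero K] [FiniteDimensional K M] (t : IsSl2Triple h e f) :
    IsNilpotent (toEnd K L M e) := by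
  refine isNilpotent_toEnd_of_mem_span_lie ?_
  rw [← Submodule.smul_mem_iff _ (two_ne_zero (α := K))]
  exact Submodule.subset_span ⟨h, e, lie_self e, t.lie_h_e_smul K⟩

/-- The action on `M` of the Casimir element `h² + 2h + 4fe` of an `sl₂`-triple, normalized to avoid
division by `4`; it separates the isotypic components of `M` by their highest weights. -/
def casimir (h e f : L) : Module.End K M :=
  toEnd K L M h ^ 2 + (2 : K) • toEnd K L M h + (4 : K) • (toEnd K L M f * toEnd K L M e)

end

theorem casimir_apply (v : M) :
    casimir K M h e f v = ⁅h, ⁅h, v⁆⁆ + (2 : K) • ⁅h, v⁆ + (4 : K) • ⁅f, ⁅e, v⁆⁆ := by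
  simp [casimir, pow_two]

theorem commute_toEnd_h_casimir (t : IsSl2Triple h e f) :
    Commute (toEnd K L M h) (casimir K M h e f) := by
  ext v
  simp only [Module.End.mul_apply, casimir_apply, LieModule.toEnd_apply_apply, lie_add, lie_smul,
    leibniz_lie h f, leibniz_lie h e, t.lie_h_e_smul K, t.lie_lie_smul_f K, smul_lie, neg_lie]
  module

theorem commute_toEnd_e_casimir (t : IsSl2Triple h e f) :
    Commute (toEnd K L M e) (casimir K M h e f) := by
  have lie_h_lie_e (v : M) : ⁅h, ⁅e, v⁆⁆ = (2 : K) • ⁅e, v⁆ + ⁅e, ⁅h, v⁆⁆ := by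
    rw [leibniz_lie, t.lie_h_e_smul K, smul_lie]
  ext v
  simp only [Module.End.mul_apply, casimir_apply, LieModule.toEnd_apply_apply, lie_add, lie_smul,
    leibniz_lie e f, t.lie_e_f, lie_h_lie_e]
  module

theorem lie_h_pow_toEnd_f (t : IsSl2Triple h e f) (n : ℕ) (v : M) :
    ⁅h, (toEnd K L M f ^ n) v⁆ = (toEnd K L M f ^ n) (⁅h, v⁆ - (2 * n : K) • v) := by
  induction n with
  | zero => simp
  | succ n ih =>
    rw [pow_succ', Module.End.mul_apply, Module.End.mul_apply, LieModule.toEnd_apply_apply,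
      LieModule.toEnd_apply_apply, leibniz_lie, t.lie_lie_smul_f K, ih]
    simp only [neg_lie, smul_lie, map_sub, map_smul, lie_sub, lie_smul]
    push_cast
    module

theorem lie_e_pow_succ_toEnd_f (t : IsSl2Triple h e f) {v : M} (hv : ⁅e, v⁆ = 0) (n : ℕ) :
    ⁅e, (toEnd K L M f ^ (n + 1)) v⁆ =
      (n + 1 : K) • (toEnd K L M f ^ n) (⁅h, v⁆ - (n : K) • v) := by
  induction n with
  | zero => simp [t.lie_e_f, leibniz_lie e f, hv]
  | succ n ih =>
    rw [pow_succ' _ (n + 1), Module.End.mul_apply, LieModule.toEnd_apply_apply, leibniz_lie,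
      t.lie_e_f, ih, lie_h_pow_toEnd_f t, lie_smul, ← LieModule.toEnd_apply_apply K L M f,
      ← Module.End.mul_apply, ← pow_succ']
    simp only [map_sub, map_smul]
    push_cast
    module

theorem pow_toEnd_e_mem_maxGenEigenspace (t : IsSl2Triple h e f) {μ : K} {u : M}
    (hu : u ∈ (toEnd K L M h).maxGenEigenspace μ) (k : ℕ) :
    (toEnd K L M e ^ k) u ∈ (toEnd K L M h).maxGenEigenspace (μ + 2 * k) := by
  have he : e ∈ (toEnd K L L h).maxGenEigenspace 2 :=
    eigenspace_le_maxGenEigenspace (mem_eigenspace_iff.mpr (t.lie_h_e_smul K))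
  induction k with
  | zero => simpa using hu
  | succ k ih =>
    convert LieModule.lie_mem_maxGenEigenspace_toEnd he ih using 2
    · push_cast
      ring
    · rw [pow_succ', Module.End.mul_apply, LieModule.toEnd_apply_apply]

variable [CharZero K] [FiniteDimensional K M]

theorem ker_toEnd_e_inf_maxGenEigenspace_le_eigenspace (t : IsSl2Triple h e f) (μ : K) :
    (toEnd K L M e).ker ⊓ (toEnd K L M h).maxGenEigenspace μ ≤
      (toEnd K L M h).eigenspace μ := by
  -- If `h u = μ u + w` with `w ≠ 0`, then `w` is primitive of some weight `n`, and applying `e`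
  -- shows by induction that no `f ^ (n + j + 1) u` vanishes, although `f` acts nilpotently.
  have lie_e_lie_h {u : M} (hu : ⁅e, u⁆ = 0) : ⁅e, ⁅h, u⁆⁆ = 0 := by
    rw [leibniz_lie, ← lie_skew, t.lie_h_e_smul K, neg_lie, smul_lie, hu, lie_zero, smul_zero,
      neg_zero, add_zero]
  refine inf_maxGenEigenspace_le_eigenspace (fun u hu ↦ lie_e_lie_h hu) fun u hu w huw hw ↦ ?_
  change ⁅e, u⁆ = 0 at hu
  change ⁅h, u⁆ = μ • u + w at huw
  by_contra hw0
  have w_primitive : t.HasPrimitiveVectorWith w μ := ⟨hw0, hw, by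
    rw [eq_sub_of_add_eq' huw.symm, lie_sub, lie_smul, lie_e_lie_h hu, hu, smul_zero, sub_zero]⟩
  obtain ⟨n, rfl⟩ := w_primitive.exists_nat
  have lie_e_pow (j : ℕ) : ⁅e, (toEnd K L M f ^ (n + j + 1)) u⁆ =
      (n + j + 1 : K) • ((toEnd K L M f ^ (n + j)) w - (j : K) • (toEnd K L M f ^ (n + j)) u) := by
    rw [lie_e_pow_succ_toEnd_f t hu, huw, ← map_smul _ (j : K), ← map_sub]
    push_cast
    congr 2
    module
  have pow_ne_zero (j : ℕ) : (toEnd K L M f ^ (n + j + 1)) u ≠ 0 := by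
    induction j with
    | zero =>
      intro h0
      have := lie_e_pow 0
      rw [h0, lie_zero, eq_comm,
        smul_eq_zero_iff_right (by exact_mod_cast n.succ_ne_zero)] at this
      exact w_primitive.pow_toEnd_f_ne_zero_of_eq_nat rfl le_rfl (by simpa using this)
    | succ j ih =>
      intro hj
      have f_pow_w : (toEnd K L M f ^ (n + (j + 1))) w = 0 :=
        Module.End.pow_map_zero_of_le (by omega) (w_primitive.pow_toEnd_f_eq_zero_of_eq_nat rfl)
      have := lie_e_pow (j + 1)
      rw [hj, f_pow_w, lie_zero, zero_sub, eq_comm, smul_neg, neg_eq_zero, smul_smul,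
        smul_eq_zero_iff_right (by norm_cast)] at this
      exact ih this
  obtain ⟨N, hN⟩ := isNilpotent_toEnd_e K M t.symm
  refine pow_ne_zero N ?_
  rw [show n + N + 1 = n + 1 + N by ring, pow_add, hN, mul_zero, LinearMap.zero_apply]

theorem exists_pow_toEnd_e_ne_zero (t : IsSl2Triple h e f) {μ c : K} {u : M} (hu : u ≠ 0)
    (hμ : u ∈ (toEnd K L M h).maxGenEigenspace μ)
    (hc : u ∈ (casimir K M h e f).maxGenEigenspace c) :
    ∃ k m : ℕ, (toEnd K L M e ^ k) u ≠ 0 ∧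
      ⁅h, (toEnd K L M e ^ k) u⁆ = (μ + 2 * k) • (toEnd K L M e ^ k) u ∧
      μ + 2 * k = m ∧ c = m * (m + 2) := by
  obtain ⟨k, hk, hk'⟩ := Nat.exists_not_and_succ_of_not_zero_of_exists
    (p := fun k ↦ (toEnd K L M e ^ k) u = 0) hu <|
      (isNilpotent_toEnd_e K M t).imp fun k hk ↦ by rw [hk, LinearMap.zero_apply]
  set v := (toEnd K L M e ^ k) u with hv
  have lie_e_v : ⁅e, v⁆ = 0 := by
    rwa [pow_succ', Module.End.mul_apply, LieModule.toEnd_apply_apply] at hk'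
  have lie_h_v : ⁅h, v⁆ = (μ + 2 * k) • v := mem_eigenspace_iff.mp <|
    ker_toEnd_e_inf_maxGenEigenspace_le_eigenspace t _
      ⟨lie_e_v, pow_toEnd_e_mem_maxGenEigenspace t hμ k⟩
  obtain ⟨m, hm⟩ := IsSl2Triple.HasPrimitiveVectorWith.exists_nat (t := t) ⟨hk, lie_h_v, lie_e_v⟩
  refine ⟨k, m, hk, lie_h_v, hm, ?_⟩
  have casimir_v : v ∈ (casimir K M h e f).eigenspace (m * (m + 2)) := by
    rw [mem_eigenspace_iff, casimir_apply, lie_e_v, lie_h_v, lie_smul, lie_h_v, hm, lie_zero]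
    module
  have hvc : v ∈ (casimir K M h e f).maxGenEigenspace c :=
    mapsTo_maxGenEigenspace_of_comm ((commute_toEnd_e_casimir t).pow_left k).symm c hc
  by_contra hne
  exact hk <| (Submodule.disjoint_def.mp (disjoint_genEigenspace _ hne _ _)) v hvc
    (eigenspace_le_maxGenEigenspace casimir_v)

theorem maxGenEigenspace_toEnd_h_inf_casimir_le_eigenspace (t : IsSl2Triple h e f) (μ c : K) :
    (casimir K M h e f).maxGenEigenspace c ⊓ (toEnd K L M h).maxGenEigenspace μ ≤
      (toEnd K L M h).eigenspace μ := by
  -- Both `u` and `w = h u - μ u` are raised to highest weight vectors by the same power `e ^ k`,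
  -- as `c` determines the highest weight; but `e ^ k u` is an eigenvector, forcing `e ^ k w = 0`.
  refine inf_maxGenEigenspace_le_eigenspace
    (mapsTo_maxGenEigenspace_of_comm (commute_toEnd_h_casimir t).symm c) fun u hu w huw hw ↦ ?_
  by_contra hw0
  have hu0 : u ≠ 0 := by
    rintro rfl
    simp_all
  have hwc : w ∈ (casimir K M h e f).maxGenEigenspace c := by
    rw [eq_sub_of_add_eq' huw.symm]
    exact sub_mem (mapsTo_maxGenEigenspace_of_comm (commute_toEnd_h_casimir t).symm c hu)
      (Submodule.smul_mem _ _ hu)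
  have huμ : u ∈ (toEnd K L M h).maxGenEigenspace μ :=
    (mem_maxGenEigenspace _ _ _).mpr ⟨2, by simp [pow_two, huw, hw]⟩
  have hwμ : w ∈ (toEnd K L M h).maxGenEigenspace μ :=
    eigenspace_le_maxGenEigenspace (mem_eigenspace_iff.mpr hw)
  obtain ⟨k, m, -, hku, hkm, hcm⟩ := exists_pow_toEnd_e_ne_zero t hu0 huμ hu
  obtain ⟨l, n, hlw, -, hln, hcn⟩ := exists_pow_toEnd_e_ne_zero t hw0 hwμ hwc
  obtain rfl : m = n := by
    have : m * (m + 2) = n * (n + 2) := by exact_mod_cast hcm.symm.trans hcn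
    nlinarith
  obtain rfl : k = l := by
    have : (2 * k : K) = 2 * l := add_left_cancel (hkm.trans hln.symm)
    exact_mod_cast mul_left_cancel₀ two_ne_zero this
  refine hlw ?_
  have := lie_h_pow_toEnd_f (K := K) t.symm k u
  rw [neg_lie, hku, neg_lie, show ⁅h, u⁆ = μ • u + w from huw] at this
  simp only [map_sub, map_neg, map_add, map_smul] at this
  linear_combination (norm := module) this

theorem iSup_eigenspace_toEnd_h_eq_top [IsAlgClosed K] (t : IsSl2Triple h e f) :
    ⨆ μ, (toEnd K L M h).eigenspace μ = ⊤ := by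
  have invariant (c u) (hu : u ∈ (casimir K M h e f).maxGenEigenspace c) :=
    mapsTo_maxGenEigenspace_of_comm (commute_toEnd_h_casimir t).symm c hu
  rw [eq_top_iff, ← iSup_maxGenEigenspace_eq_top (casimir K M h e f)]
  refine iSup_le fun c ↦ ?_
  rw [← inf_top_eq ((casimir K M h e f).maxGenEigenspace c),
    ← iSup_maxGenEigenspace_eq_top (toEnd K L M h), maxGenEigenspace,
    Submodule.inf_iSup_genEigenspace (invariant c)]
  exact iSup_mono fun μ ↦ maxGenEigenspace_toEnd_h_inf_casimir_le_eigenspace t μ c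

theorem isSemisimple_toEnd_h [IsAlgClosed K] (he : ⁅h, e⁆ = (2 : K) • e)
    (hf : ⁅h, f⁆ = (-2 : K) • f) (hef : ⁅e, f⁆ = h) : (toEnd K L M h).IsSemisimple := by
  by_cases h0 : h = 0
  · rw [h0, map_zero]
    exact isSemisimple_zero
  · refine isSemisimple_of_iSup_eigenspace_eq_top
      (iSup_eigenspace_toEnd_h_eq_top (e := e) (f := f) ⟨h0, hef, ?_, ?_⟩)
    · rw [he, two_smul, two_nsmul]
    · rw [hf, neg_smul, two_smul, two_nsmul]

end Sl2

section TraceForm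

open LieModule (traceForm toEnd)

section CommRing

variable {R L : Type*} [CommRing R] [LieRing L] [LieAlgebra R L]

theorem toSubmodule_derivedSeries_one :
    (LieAlgebra.derivedSeries R L 1).toSubmodule =
      Submodule.span R {z : L | ∃ a b : L, ⁅a, b⁆ = z} := by
  rw [LieAlgebra.derivedSeries_def, LieAlgebra.derivedSeriesOfIdeal_succ,
    LieAlgebra.derivedSeriesOfIdeal_zero, LieSubmodule.lieIdeal_oper_eq_linear_span']
  simp

theorem center_eq_orthogonal_derivedSeries_one {M : Type*} [AddCommGroup M] [Module R M]
    [LieRingModule L M] [LieModule R L M] (hM : (traceForm R L M).ker = ⊥) :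
    (LieAlgebra.center R L).toSubmodule =
      LinearMap.BilinForm.orthogonal (traceForm R L M)
        (LieAlgebra.derivedSeries R L 1).toSubmodule := by
  ext z
  refine ⟨fun hz x hx ↦ LieModule.traceForm_apply_eq_zero_of_mem_lcs_of_mem_center R L M hx hz,
    fun hz ↦ (LieModule.mem_maxTrivSubmodule R L L z).mpr fun x ↦ LinearMap.ker_eq_bot'.mp hM _ ?_⟩
  ext y
  rw [LieModule.traceForm_comm, ← LieModule.traceForm_apply_lie_apply]
  refine hz _ ?_
  rw [toSubmodule_derivedSeries_one]
  exact Submodule.subset_span ⟨y, x, rfl⟩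

end CommRing

variable {K L M : Type*} [Field K] [LieRing L] [LieAlgebra K L]
  [AddCommGroup M] [Module K M] [LieRingModule L M] [LieModule K L M]
  [FiniteDimensional K M]

theorem traceForm_eq_zero_of_forall_isNilpotent {J : LieIdeal K L}
    (hJ : ∀ x ∈ J, IsNilpotent (toEnd K L M x)) {x : L} (hx : x ∈ J) (y : L) :
    traceForm K L M x y = 0 := by
  have isNilpotent : LieModule.IsNilpotent J M :=
    (LieModule.isNilpotent_iff_forall' (R := K)).mpr fun z ↦ hJ z z.2
  obtain ⟨n, hn⟩ := (LieModule.isNilpotent_iff K J M).mp isNilpotent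
  have pow_apply_mem_lcs (m : ℕ) (v : M) :
      ((toEnd K L M x ∘ₗ toEnd K L M y) ^ m) v ∈ J.lcs M m := by
    induction m with
    | zero => simp
    | succ m ih =>
      rw [pow_succ', LieIdeal.lcs_succ]
      exact LieSubmodule.lie_mem_lie hx (LieSubmodule.lie_mem _ ih)
  refine (LinearMap.isNilpotent_trace_of_isNilpotent ⟨n, ?_⟩).eq_zero
  ext v
  have := pow_apply_mem_lcs n v
  rwa [← LieSubmodule.mem_toSubmodule, LieIdeal.coe_lcs_eq, hn] at this

variable [CharZero K]

theorem eq_bot_of_forall_mem_span_lie (hM : (traceForm K L M).ker = ⊥) {J : LieIdeal K L}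
    (hJ : ∀ x ∈ J, x ∈ Submodule.span K {z | ∃ a b : L, ⁅x, b⁆ = 0 ∧ ⁅a, b⁆ = z}) : J = ⊥ := by
  refine (LieSubmodule.eq_bot_iff J).mpr fun x hx ↦ LinearMap.ker_eq_bot'.mp hM x ?_
  ext y
  exact traceForm_eq_zero_of_forall_isNilpotent
    (fun x hx ↦ isNilpotent_toEnd_of_mem_span_lie (hJ x hx)) hx y

theorem disjoint_derivedSeries_one_center (hM : (traceForm K L M).ker = ⊥) :
    Disjoint (LieAlgebra.derivedSeries K L 1) (LieAlgebra.center K L) := by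
  refine disjoint_iff.mpr (eq_bot_of_forall_mem_span_lie hM fun x ⟨hxD, hxZ⟩ ↦ ?_)
  rw [toSubmodule_derivedSeries_one] at hxD
  refine Submodule.span_mono ?_ hxD
  rintro _ ⟨a, b, rfl⟩
  refine ⟨a, b, ?_, rfl⟩
  rw [← lie_skew, (LieModule.mem_maxTrivSubmodule K L L x).mp hxZ, neg_zero]

theorem le_center_of_isLieAbelian (hM : (traceForm K L M).ker = ⊥)
    (I : LieIdeal K L) [IsLieAbelian I] : I ≤ LieAlgebra.center K L := by
  refine (LieModule.le_max_triv_iff_bracket_eq_bot K L L).mpr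
    (eq_bot_of_forall_mem_span_lie hM fun x hx ↦ ?_)
  have hxI : x ∈ I := LieSubmodule.lie_le_right _ _ hx
  rw [← LieSubmodule.mem_toSubmodule, LieSubmodule.lieIdeal_oper_eq_linear_span'] at hx
  refine Submodule.span_mono ?_ hx
  rintro _ ⟨a, -, b, hb, rfl⟩
  exact ⟨a, b, congrArg Subtype.val (trivial_lie_zero I I ⟨x, hxI⟩ ⟨b, hb⟩), rfl⟩

variable [FiniteDimensional K L]

theorem isCompl_derivedSeries_one_center (hM : (traceForm K L M).ker = ⊥) :
    IsCompl (LieAlgebra.derivedSeries K L 1).toSubmodule (LieAlgebra.center K L).toSubmodule := by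
  have disjoint := LieSubmodule.disjoint_toSubmodule.mpr (disjoint_derivedSeries_one_center hM)
  rw [center_eq_orthogonal_derivedSeries_one hM] at disjoint ⊢
  exact (LinearMap.BilinForm.isCompl_orthogonal_iff_disjoint
    (LieModule.traceForm_isSymm K L M).isRefl).mpr disjoint

theorem ker_traceForm_derivedSeries_one_eq_bot (hM : (traceForm K L M).ker = ⊥) :
    (traceForm K (LieAlgebra.derivedSeries K L 1) M).ker = ⊥ := by
  refine LinearMap.ker_eq_bot'.mpr fun x hx ↦ Subtype.ext (LinearMap.ker_eq_bot'.mp hM x ?_)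
  ext y
  obtain ⟨d, z, hd, hz, rfl⟩ :=
    Submodule.codisjoint_iff_exists_add_eq.mp (isCompl_derivedSeries_one_center hM).codisjoint y
  rw [map_add, LieModule.traceForm_apply_eq_zero_of_mem_lcs_of_mem_center K L M x.2 hz, add_zero]
  exact LinearMap.congr_fun hx ⟨d, hd⟩

theorem center_derivedSeries_one_eq_bot (hM : (traceForm K L M).ker = ⊥) :
    LieAlgebra.center K (LieAlgebra.derivedSeries K L 1) = ⊥ := by
  refine (LieSubmodule.eq_bot_iff _).mpr fun x hx ↦ Subtype.ext ?_
  refine (LieSubmodule.mem_bot _).mp <|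
    (disjoint_derivedSeries_one_center hM).le_bot ⟨x.2, fun y ↦ ?_⟩
  obtain ⟨d, z, hd, hz, rfl⟩ :=
    Submodule.codisjoint_iff_exists_add_eq.mp (isCompl_derivedSeries_one_center hM).codisjoint y
  rw [add_lie, ← lie_skew z, (LieModule.mem_maxTrivSubmodule K L L z).mp hz, neg_zero, add_zero]
  exact congrArg Subtype.val ((LieModule.mem_maxTrivSubmodule K _ _ x).mp hx ⟨d, hd⟩)

theorem isSemisimple_derivedSeries_one (hM : (traceForm K L M).ker = ⊥) :
    LieAlgebra.IsSemisimple K (LieAlgebra.derivedSeries K L 1) := by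
  have : LieAlgebra.HasTrivialRadical K (LieAlgebra.derivedSeries K L 1) := by
    refine (LieAlgebra.hasTrivialRadical_iff_no_abelian_ideals K _).mpr fun I _ ↦ eq_bot_iff.mpr ?_
    rw [← center_derivedSeries_one_eq_bot hM]
    exact le_center_of_isLieAbelian (ker_traceForm_derivedSeries_one_eq_bot hM) I
  infer_instance

end TraceForm

section AdEigenspace

open LieAlgebra (ad)
open LieSubalgebra (engel)

section CommRing

variable {R L : Type*} [CommRing R] [LieRing L] [LieAlgebra R L] {h x y : L} {a b : R}

theorem lie_mem_eigenspace_ad (hx : x ∈ eigenspace (ad R L h) a)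
    (hy : y ∈ eigenspace (ad R L h) b) : ⁅x, y⁆ ∈ eigenspace (ad R L h) (a + b) := by
  rw [mem_eigenspace_iff, LieAlgebra.ad_apply] at hx hy ⊢
  rw [leibniz_lie, hx, hy, smul_lie, lie_smul, add_smul]

theorem killingForm_eq_zero_of_mem_eigenspace_ad [IsDomain R] (hab : a + b ≠ 0)
    (hx : x ∈ eigenspace (ad R L h) a) (hy : y ∈ eigenspace (ad R L h) b) :
    killingForm R L x y = 0 := by
  rw [mem_eigenspace_iff, LieAlgebra.ad_apply] at hx hy
  have invariant := LieModule.traceForm_apply_lie_apply R L L x h y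
  rw [← lie_skew, hx, hy] at invariant
  simp only [map_neg, map_smul, LinearMap.neg_apply, LinearMap.smul_apply,
    smul_eq_mul] at invariant
  refine (mul_eq_zero.mp ?_).resolve_left hab
  linear_combination -invariant

theorem mem_of_isCartanSubalgebra_of_forall_lie_eq_zero (H : LieSubalgebra R L)
    [hH : H.IsCartanSubalgebra] (hx : ∀ w : L, ⁅x, w⁆ = 0) : x ∈ H := by
  rw [← hH.self_normalizing, LieSubalgebra.mem_normalizer_iff]
  intro w _
  rw [hx]
  exact H.zero_mem

theorem isCartanSubalgebra_map_incl_engel {H : LieSubalgebra R (engel R h)}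
    [hH : H.IsCartanSubalgebra] (hh : ⟨h, LieSubalgebra.self_mem_engel R h⟩ ∈ H) :
    (H.map (engel R h).incl).IsCartanSubalgebra where
  nilpotent := by
    have map_eq_range : H.map (engel R h).incl = ((engel R h).incl.comp H.incl).range := by
      ext
      simp
    rw [map_eq_range]
    exact LieHom.isNilpotent_range _
  self_normalizing := by
    refine le_antisymm (fun x hx ↦ ?_) (LieSubalgebra.le_normalizer _)
    rw [LieSubalgebra.mem_normalizer_iff'] at hx
    have x_mem_engel : x ∈ engel R h := by
      obtain ⟨w, -, hw⟩ := hx h ⟨_, hh, rfl⟩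
      obtain ⟨n, hn⟩ := (LieSubalgebra.mem_engel_iff R h _).mp w.2
      refine (LieSubalgebra.mem_engel_iff R h x).mpr ⟨n + 1, ?_⟩
      rwa [pow_succ, Module.End.mul_apply, LieAlgebra.ad_apply, ← hw]
    refine ⟨⟨x, x_mem_engel⟩, ?_, rfl⟩
    rw [← hH.self_normalizing]
    refine (LieSubalgebra.mem_normalizer_iff' _ _).mpr ?_
    intro w hw
    obtain ⟨w', hw', hwx⟩ := hx w ⟨w, hw, rfl⟩
    obtain rfl : w' = ⁅w, ⟨x, x_mem_engel⟩⁆ := Subtype.ext hwx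
    exact hw'

end CommRing

variable {K g : Type*} [Field K] [LieRing g] [LieAlgebra K g] {h : g}

theorem mem_engel_iff_lie_eq_zero (hh : (ad K g h).IsSemisimple) {x : g} :
    x ∈ engel K h ↔ ⁅h, x⁆ = 0 := by
  change x ∈ (ad K g h).maxGenEigenspace 0 ↔ _
  rw [hh.isFinitelySemisimple.maxGenEigenspace_eq_eigenspace, mem_eigenspace_iff,
    LieAlgebra.ad_apply, zero_smul]

variable [IsAlgClosed K] [FiniteDimensional K g] [LieAlgebra.IsKilling K g]

theorem eq_zero_of_forall_killingForm_eq_zero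
    (hh : (ad K g h).IsSemisimple) {a : K} {x : g} (hx : x ∈ eigenspace (ad K g h) a)
    (hxy : ∀ y ∈ eigenspace (ad K g h) (-a), killingForm K g x y = 0) : x = 0 := by
  refine LinearMap.ker_eq_bot'.mp (LieAlgebra.IsKilling.ker_killingForm_eq_bot K g) x ?_
  rw [← LinearMap.ker_eq_top, eq_top_iff, ← hh.iSup_eigenspace_eq_top, iSup_le_iff]
  intro b y hy
  by_cases hab : a + b = 0
  · exact hxy y (eq_neg_of_add_eq_zero_right hab ▸ hy)
  · exact killingForm_eq_zero_of_mem_eigenspace_ad hab hx hy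

theorem isSemisimple_ad_of_forall_lie_eq_zero [CharZero K]
    (hh : (ad K g h).IsSemisimple) {z : g} (hz : ∀ w : g, ⁅h, w⁆ = 0 → ⁅z, w⁆ = 0) :
    (ad K g z).IsSemisimple := by
  have mem_engel : z ∈ engel K h := by
    rw [mem_engel_iff_lie_eq_zero hh, ← lie_skew, hz h (lie_self h), neg_zero]
  obtain ⟨y, hy⟩ := LieAlgebra.exists_isCartanSubalgebra_engel K (engel K h)
  have := isCartanSubalgebra_map_incl_engel (H := engel K y) <|
    mem_of_isCartanSubalgebra_of_forall_lie_eq_zero _ fun w ↦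
      Subtype.ext ((mem_engel_iff_lie_eq_zero hh).mp w.2)
  refine LieAlgebra.IsKilling.isSemisimple_ad_of_mem_isCartanSubalgebra
    (H := (engel K y).map (engel K h).incl) ⟨⟨z, mem_engel⟩, ?_, rfl⟩
  exact mem_of_isCartanSubalgebra_of_forall_lie_eq_zero _ fun w ↦
    Subtype.ext (hz w ((mem_engel_iff_lie_eq_zero hh).mp w.2))

end AdEigenspace

section EigenBracket

open LieAlgebra (ad)
open LieSubalgebra (engel)
open LieModule (toEnd traceForm)

/-- The span `[g(h, a), g(h, -a)]` of the brackets of elements of the eigenspaces of `ad h` for `a`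
and `-a`. It is encoded as a submodule, since it enters the argument only as a module over the
centralizer of `h`. -/
def eigenBracket {R L : Type*} [CommRing R] [LieRing L] [LieAlgebra R L] (h : L) (a : R) :
    Submodule R L :=
  Submodule.span R {z | ∃ x ∈ eigenspace (ad R L h) a,
    ∃ y ∈ eigenspace (ad R L h) (-a), z = ⁅x, y⁆}

section CommRing

variable {R L : Type*} [CommRing R] [LieRing L] [LieAlgebra R L] {h x y z w : L} {a : R}

theorem lie_mem_eigenBracket (hx : x ∈ eigenspace (ad R L h) a)
    (hy : y ∈ eigenspace (ad R L h) (-a)) : ⁅x, y⁆ ∈ eigenBracket h a :=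
  Submodule.subset_span ⟨x, hx, y, hy, rfl⟩

theorem eigenBracket_le_eigenspace_zero : eigenBracket h a ≤ eigenspace (ad R L h) 0 := by
  refine Submodule.span_le.mpr ?_
  rintro _ ⟨x, hx, y, hy, rfl⟩
  simpa using lie_mem_eigenspace_ad hx hy

theorem lie_mem_eigenBracket_of_mem_eigenspace_zero (hw : w ∈ eigenspace (ad R L h) 0)
    (hz : z ∈ eigenBracket h a) : ⁅w, z⁆ ∈ eigenBracket h a := by
  suffices eigenBracket h a ≤ (eigenBracket h a).comap (ad R L w) from this hz
  refine Submodule.span_le.mpr ?_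
  rintro _ ⟨x, hx, y, hy, rfl⟩
  change ⁅w, ⁅x, y⁆⁆ ∈ eigenBracket h a
  rw [leibniz_lie]
  exact add_mem (lie_mem_eigenBracket (zero_add a ▸ lie_mem_eigenspace_ad hw hx) hy)
    (lie_mem_eigenBracket hx (zero_add (-a) ▸ lie_mem_eigenspace_ad hw hy))

/-- The elements of `[g(h, a), g(h, -a)]` acting trivially on `g(h, a)` and `g(h, -a)`, as an ideal
of the centralizer of `h`; it is the obstruction to the Killing form being nondegenerate on
`[g(h, a), g(h, -a)]`. For an ad-semisimple `h`, the centralizer is encoded as `engel R h`. -/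
def eigenBracketAnnihilator (hh : eigenspace (ad R L h) 0 = (engel R h).toSubmodule) (a : R) :
    LieIdeal R (engel R h) where
  carrier := {z | (z : L) ∈ eigenBracket h a ∧
    ∀ b ∈ ({a, -a} : Set R), ∀ x ∈ eigenspace (ad R L h) b, ⁅(z : L), x⁆ = 0}
  zero_mem' := by simp
  add_mem' := fun ⟨hu, hu'⟩ ⟨hv, hv'⟩ ↦
    ⟨add_mem hu hv, fun b hb x hx ↦ by simp [hu' b hb x hx, hv' b hb x hx]⟩
  smul_mem' := fun c u ⟨hu, hu'⟩ ↦
    ⟨Submodule.smul_mem _ c hu, fun b hb x hx ↦ by simp [hu' b hb x hx]⟩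
  lie_mem := by
    rintro ⟨w, hw⟩ z ⟨hz, hz'⟩
    rw [← LieSubalgebra.mem_toSubmodule, ← hh] at hw
    refine ⟨lie_mem_eigenBracket_of_mem_eigenspace_zero hw hz, fun b hb x hx ↦ ?_⟩
    change ⁅⁅w, (z : L)⁆, x⁆ = 0
    rw [lie_lie, hz' b hb x hx, lie_zero, hz' b hb _ (zero_add b ▸ lie_mem_eigenspace_ad hw hx),
      sub_zero]

end CommRing

variable {K g : Type*} [Field K] [IsAlgClosed K] [CharZero K] [LieRing g] [LieAlgebra K g]
  [FiniteDimensional K g] [LieAlgebra.IsKilling K g] {h z : g} {a : K}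

theorem eq_zero_of_mem_eigenBracket_of_forall_lie_eq_zero (hh : (ad K g h).IsSemisimple)
    (hz : z ∈ eigenBracket h a)
    (hzx : ∀ b ∈ ({a, -a} : Set K), ∀ x ∈ eigenspace (ad K g h) b, ⁅z, x⁆ = 0) : z = 0 := by
  have centralizer_eq_engel : eigenspace (ad K g h) 0 = (engel K h).toSubmodule :=
    (hh.isFinitelySemisimple.maxGenEigenspace_eq_eigenspace 0).symm
  have acts_nilpotently (u : engel K h) (hu : u ∈ eigenBracketAnnihilator centralizer_eq_engel a) :
      IsNilpotent (toEnd K (engel K h) g u) := by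
    change IsNilpotent (toEnd K g g (u : g))
    refine isNilpotent_toEnd_of_mem_span_lie (Submodule.span_mono ?_ hu.1)
    rintro _ ⟨x, -, y, hy, rfl⟩
    exact ⟨x, y, hu.2 (-a) (by simp) y hy, rfl⟩
  have hz0 := eigenBracket_le_eigenspace_zero hz
  refine eq_zero_of_forall_killingForm_eq_zero hh hz0 fun w hw ↦ ?_
  rw [neg_zero, centralizer_eq_engel] at hw
  rw [centralizer_eq_engel] at hz0
  exact traceForm_eq_zero_of_forall_isNilpotent acts_nilpotently (x := ⟨z, hz0⟩) ⟨hz, hzx⟩ ⟨w, hw⟩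

theorem eq_zero_of_mem_eigenBracket_of_forall_killingForm_eq_zero (hh : (ad K g h).IsSemisimple)
    (hz : z ∈ eigenBracket h a) (hzu : ∀ u ∈ eigenBracket h a, killingForm K g z u = 0) :
    z = 0 := by
  have hz0 := eigenBracket_le_eigenspace_zero hz
  refine eq_zero_of_mem_eigenBracket_of_forall_lie_eq_zero hh hz fun b hb x hx ↦ ?_
  refine eq_zero_of_forall_killingForm_eq_zero hh (lie_mem_eigenspace_ad hz0 hx) fun y hy ↦ ?_
  rw [zero_add] at hy
  rw [LieModule.traceForm_apply_lie_apply]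
  obtain rfl | rfl := hb
  · exact hzu _ (lie_mem_eigenBracket hx hy)
  · rw [neg_neg] at hy
    rw [← lie_skew, map_neg, hzu _ (lie_mem_eigenBracket hy hx), neg_zero]

theorem ker_traceForm_eq_bot_of_toSubmodule_eq_eigenBracket (hh : (ad K g h).IsSemisimple)
    {k : LieSubalgebra K g} (hk : k.toSubmodule = eigenBracket h a) :
    (traceForm K k g).ker = ⊥ := by
  refine LinearMap.ker_eq_bot'.mpr fun z hz ↦ Subtype.ext ?_
  refine eq_zero_of_mem_eigenBracket_of_forall_killingForm_eq_zero hh (hk.le z.2) fun u hu ↦ ?_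
  exact LinearMap.congr_fun hz ⟨u, hk.ge hu⟩

theorem lie_eq_zero_of_mem_eigenBracket_of_forall_lie_eq_zero (hh : (ad K g h).IsSemisimple)
    (hz : z ∈ eigenBracket h a) (hzu : ∀ u ∈ eigenBracket h a, ⁅z, u⁆ = 0) {w : g}
    (hw : ⁅h, w⁆ = 0) : ⁅z, w⁆ = 0 := by
  have hw0 : w ∈ eigenspace (ad K g h) 0 := by
    rw [mem_eigenspace_iff, LieAlgebra.ad_apply, hw, zero_smul]
  rw [← lie_skew, neg_eq_zero]
  refine eq_zero_of_mem_eigenBracket_of_forall_killingForm_eq_zero hh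
    (lie_mem_eigenBracket_of_mem_eigenspace_zero hw0 hz) fun u hu ↦ ?_
  rw [LieModule.traceForm_apply_lie_apply, hzu u hu, map_zero]

end EigenBracket

end SpanBracket

open SpanBracket in
theorem span_bracket_eigenspaces_reductive_general
    {K : Type*} [Field K] [IsAlgClosed K] [CharZero K]
    {g : Type*} [LieRing g] [LieAlgebra K g] [FiniteDimensional K g]
    [LieAlgebra.IsSemisimple K g]
    {h : g} (hh : (LieAlgebra.ad K g h).IsSemisimple) (a : K) (k : LieSubalgebra K g)
    (hk : k.toSubmodule = eigenBracket h a) :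
    IsCompl (LieAlgebra.derivedSeries K k 1).toSubmodule
        (LieAlgebra.center K k).toSubmodule ∧
      LieAlgebra.IsSemisimple K (LieAlgebra.derivedSeries K k 1) ∧
      ∀ z : k, z ∈ LieAlgebra.center K k →
        Module.End.IsSemisimple (LieAlgebra.ad K g (z : g)) := by
  have nondegenerate := ker_traceForm_eq_bot_of_toSubmodule_eq_eigenBracket hh hk
  refine ⟨isCompl_derivedSeries_one_center nondegenerate,
    isSemisimple_derivedSeries_one nondegenerate, fun z hz ↦ ?_⟩
  refine isSemisimple_ad_of_forall_lie_eq_zero hh fun w hw ↦ ?_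
  refine lie_eq_zero_of_mem_eigenBracket_of_forall_lie_eq_zero hh (hk.le z.2) (fun u hu ↦ ?_) hw
  rw [← lie_skew, neg_eq_zero]
  exact congrArg Subtype.val ((LieModule.mem_maxTrivSubmodule K k k z).mp hz ⟨u, hk.ge hu⟩)

/-- For an `sl2`-triple `(e, h, f)` in a finite-dimensional semisimple Lie algebra over an
algebraically closed field of characteristic zero and any integer `i`, any Lie subalgebra
`k` of `g` whose underlying subspace is the linear span of `[g(h,i), g(h,-i)]` is
reductive, and every element of its center is ad-semisimple in `g`:
`k = [k,k] ⊕ z(k)`, the derived subalgebra `[k,k]` is semisimple, and `ad z : g → g` is a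
semisimple endomorphism for every `z ∈ z(k)`. -/
theorem span_bracket_eigenspaces_reductive
    {K : Type*} [Field K] [IsAlgClosed K] [CharZero K]
    {g : Type*} [LieRing g] [LieAlgebra K g] [FiniteDimensional K g]
    [LieAlgebra.IsSemisimple K g]
    (e h f : g) (he : ⁅h, e⁆ = (2 : K) • e) (hf : ⁅h, f⁆ = (-2 : K) • f) (hef : ⁅e, f⁆ = h)
    (i : ℤ) (k : LieSubalgebra K g)
    (hk : k.toSubmodule = Submodule.span K {z : g |
        ∃ x ∈ eigenspace (LieAlgebra.ad K g h) (i : K),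
        ∃ y ∈ eigenspace (LieAlgebra.ad K g h) ((-i : ℤ) : K), z = ⁅x, y⁆}) :
    IsCompl (LieAlgebra.derivedSeries K k 1).toSubmodule
        (LieAlgebra.center K k).toSubmodule ∧
      LieAlgebra.IsSemisimple K (LieAlgebra.derivedSeries K k 1) ∧
      ∀ z : k, z ∈ LieAlgebra.center K k →
        Module.End.IsSemisimple (LieAlgebra.ad K g (z : g)) := by
  refine span_bracket_eigenspaces_reductive_general
    (SpanBracket.isSemisimple_toEnd_h he hf hef) (i : K) k ?_
  rw [hk, Int.cast_neg, SpanBracket.eigenBracket]
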